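/- arXiv:2109.00447 — 6 statements merged into one kernel-verified Lean document; each statement's English description precedes it below -/
import Mathlib

section
/- A linear bijection F of T*𝔥₃, written in the basis (e₁,…,e₆) as a 2×2 block matrix with 3×3 blocks F = [[A, C],[B, D]], is a Lie algebra automorphism of T*𝔥₃ if and only if C = 0, A is invertible, D = (det A)·A^{−T}, and B is an arbitrary 3×3 real matrix. -/
open Matrix

noncomputable section

/-- The Lie bracket of `T*𝔥₃` in the basis `(e₁,…,e₆)`:
`[e₁,e₂]=e₆`, `[e₁,e₃]=−e₅`, `[e₂,e₃]=e₄`. -/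
def bra (x y : Fin 6 → ℝ) : Fin 6 → ℝ :=
  ![0, 0, 0, x 1 * y 2 - x 2 * y 1, x 2 * y 0 - x 0 * y 2, x 0 * y 1 - x 1 * y 0]

/-!
Writing `T*𝔥₃ = R³ ⊕ R³`, the bracket is the cross product of the first components, placed in the
second summand. Cross products span `R³`, so the second summand is the derived algebra; an
endomorphism preserves it (`C = 0`), and its action `D` there is determined by its action `A` on the
quotient. Since `(A u) × (A v) = (cof A) (u × v)`, this action is the cofactor matrix of `A`, which
is `(det A) A^{-T}` when `A` is invertible. The resulting block triangular map is bijective exactly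
when `A` is invertible, whatever `B` is.
-/

section CrossProduct

variable {R : Type*} [CommRing R]

theorem single_add_one_cross_single_add_two (i : Fin 3) :
    (Pi.single (i + 1) 1 : Fin 3 → R) ⨯₃ Pi.single (i + 2) 1 = Pi.single i 1 := by
  ext j
  fin_cases i <;> fin_cases j <;> simp [cross_apply]

theorem ext_of_mulVec_cross {m : Type*} {M N : Matrix m (Fin 3) R}
    (h : ∀ u v : Fin 3 → R, M *ᵥ (u ⨯₃ v) = N *ᵥ (u ⨯₃ v)) : M = N :=
  ext_of_mulVec_single fun i => by
    simpa only [single_add_one_cross_single_add_two] using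
      h (Pi.single (i + 1) 1) (Pi.single (i + 2) 1)

theorem mulVec_cross_mulVec (A : Matrix (Fin 3) (Fin 3) R) (u v : Fin 3 → R) :
    (A *ᵥ u) ⨯₃ (A *ᵥ v) = A.adjugateᵀ *ᵥ (u ⨯₃ v) := by
  ext i
  fin_cases i <;>
    simp [cross_apply, adjugate_fin_three, mulVec, dotProduct, Fin.sum_univ_three] <;> ring

end CrossProduct

section Invertibility

variable {n R : Type*} [Fintype n] [DecidableEq n] [CommRing R]

theorem bijective_mulVec_iff_isUnit {M : Matrix n n R} :
    Function.Bijective M.mulVec ↔ IsUnit M :=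
  ⟨fun h => mulVec_surjective_iff_isUnit.1 h.2,
    fun h => ⟨mulVec_injective_of_isUnit h, mulVec_surjective_iff_isUnit.2 h⟩⟩

theorem det_smul_inv_eq_adjugate {A : Matrix n n R} (hA : IsUnit A.det) :
    A.det • A⁻¹ = A.adjugate := by
  rw [inv_def, smul_smul, Ring.mul_inverse_cancel _ hA, one_smul]

theorem isUnit_fromBlocks_zero_adjugate_transpose_iff {A B : Matrix n n R} :
    IsUnit (fromBlocks A 0 B A.adjugateᵀ) ↔ IsUnit A.det := by
  rw [isUnit_fromBlocks_zero₁₂, isUnit_iff_isUnit_det, isUnit_iff_isUnit_det, det_transpose,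
    det_adjugate, and_iff_left_of_imp]
  exact fun hA => hA.pow _

end Invertibility

section Reindex

variable {m n R : Type*} [Fintype m] [Fintype n] [NonUnitalNonAssocSemiring R]

theorem reindex_mulVec_comp_symm (e : m ≃ n) (M : Matrix m m R) (x : m → R) :
    reindex e e M *ᵥ (x ∘ e.symm) = (M *ᵥ x) ∘ e.symm := by
  rw [reindex_apply, submatrix_mulVec_equiv, Equiv.symm_symm, Function.comp_assoc,
    Equiv.symm_comp_self, Function.comp_id]

theorem bijective_reindex_mulVec_iff (e : m ≃ n) {M : Matrix m m R} :
    Function.Bijective (reindex e e M).mulVec ↔ Function.Bijective M.mulVec := by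
  let coords : (m → R) ≃ (n → R) := e.arrowCongr (Equiv.refl R)
  have hconj : (reindex e e M).mulVec ∘ coords = coords ∘ M.mulVec :=
    funext (reindex_mulVec_comp_symm e M)
  rw [← coords.comp_bijective, ← hconj, coords.bijective_comp]

theorem reindex_preserves_operation_iff (e : m ≃ n) {M : Matrix m m R}
    {b : (m → R) → (m → R) → m → R} {b' : (n → R) → (n → R) → n → R}
    (hb : ∀ x y, b' (x ∘ e.symm) (y ∘ e.symm) = b x y ∘ e.symm) :
    (∀ x y, reindex e e M *ᵥ b' x y = b' (reindex e e M *ᵥ x) (reindex e e M *ᵥ y)) ↔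
      ∀ x y, M *ᵥ b x y = b (M *ᵥ x) (M *ᵥ y) := by
  let coords : (m → R) ≃ (n → R) := e.arrowCongr (Equiv.refl R)
  refine (coords.forall₂_congr coords fun {x y} => ?_).symm
  change _ ↔ reindex e e M *ᵥ b' (x ∘ e.symm) (y ∘ e.symm) =
    b' (reindex e e M *ᵥ (x ∘ e.symm)) (reindex e e M *ᵥ (y ∘ e.symm))
  simp only [reindex_mulVec_comp_symm, hb]
  exact e.symm.surjective.injective_comp_right.eq_iff.symm

end Reindex

section CotangentBracket

variable {R : Type*} [CommRing R]

/-- The Lie bracket of `T*𝔥₃` over a commutative ring: the coordinates along `e₁, e₂, e₃` are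
indexed by the left summand, those along `e₄, e₅, e₆` by the right one. -/
def cotangentBracket (x y : Fin 3 ⊕ Fin 3 → R) : Fin 3 ⊕ Fin 3 → R :=
  Sum.elim (0 : Fin 3 → R) ((x ∘ Sum.inl) ⨯₃ (y ∘ Sum.inl))

theorem fromBlocks_mulVec_cotangentBracket (A C B D : Matrix (Fin 3) (Fin 3) R)
    (x y : Fin 3 ⊕ Fin 3 → R) :
    fromBlocks A C B D *ᵥ cotangentBracket x y =
      Sum.elim (C *ᵥ ((x ∘ Sum.inl) ⨯₃ (y ∘ Sum.inl)))
        (D *ᵥ ((x ∘ Sum.inl) ⨯₃ (y ∘ Sum.inl))) := by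
  simp only [cotangentBracket, fromBlocks_mulVec, Sum.elim_comp_inl, Sum.elim_comp_inr,
    mulVec_zero, zero_add]

theorem cotangentBracket_fromBlocks_mulVec (A B D : Matrix (Fin 3) (Fin 3) R)
    (x y : Fin 3 ⊕ Fin 3 → R) :
    cotangentBracket (fromBlocks A 0 B D *ᵥ x) (fromBlocks A 0 B D *ᵥ y) =
      Sum.elim (0 : Fin 3 → R) (A.adjugateᵀ *ᵥ ((x ∘ Sum.inl) ⨯₃ (y ∘ Sum.inl))) := by
  simp only [cotangentBracket, fromBlocks_mulVec, Sum.elim_comp_inl, zero_mulVec, add_zero,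
    mulVec_cross_mulVec]

theorem fromBlocks_preserves_cotangentBracket_iff {A C B D : Matrix (Fin 3) (Fin 3) R} :
    (∀ x y, fromBlocks A C B D *ᵥ cotangentBracket x y =
        cotangentBracket (fromBlocks A C B D *ᵥ x) (fromBlocks A C B D *ᵥ y)) ↔
      C = 0 ∧ D = A.adjugateᵀ := by
  constructor
  · intro h
    have hC : C = 0 := ext_of_mulVec_cross fun u v => by
      have huv := h (Sum.elim u 0) (Sum.elim v 0)
      rw [fromBlocks_mulVec_cotangentBracket, cotangentBracket, Sum.elim_eq_iff] at huv
      simpa only [Sum.elim_comp_inl, zero_mulVec] using huv.1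
    subst hC
    refine ⟨rfl, ext_of_mulVec_cross fun u v => ?_⟩
    have huv := h (Sum.elim u 0) (Sum.elim v 0)
    rw [fromBlocks_mulVec_cotangentBracket, cotangentBracket_fromBlocks_mulVec,
      Sum.elim_eq_iff] at huv
    simpa only [Sum.elim_comp_inl] using huv.2
  · rintro ⟨rfl, rfl⟩ x y
    rw [fromBlocks_mulVec_cotangentBracket, cotangentBracket_fromBlocks_mulVec, zero_mulVec]

theorem stmt_0_general (A C B D : Matrix (Fin 3) (Fin 3) R) :
    (Function.Bijective (fromBlocks A C B D).mulVec ∧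
        ∀ x y, fromBlocks A C B D *ᵥ cotangentBracket x y =
          cotangentBracket (fromBlocks A C B D *ᵥ x) (fromBlocks A C B D *ᵥ y)) ↔
      (C = 0 ∧ IsUnit A.det ∧ D = A.det • (A⁻¹)ᵀ) := by
  rw [bijective_mulVec_iff_isUnit, fromBlocks_preserves_cotangentBracket_iff, ← transpose_smul]
  constructor
  · rintro ⟨hF, rfl, rfl⟩
    have hA : IsUnit A.det := isUnit_fromBlocks_zero_adjugate_transpose_iff.1 hF
    exact ⟨rfl, hA, by rw [det_smul_inv_eq_adjugate hA]⟩
  · rintro ⟨rfl, hA, rfl⟩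
    rw [det_smul_inv_eq_adjugate hA]
    exact ⟨isUnit_fromBlocks_zero_adjugate_transpose_iff.2 hA, rfl, rfl⟩

end CotangentBracket

theorem bra_comp_finSumFinEquiv_symm (x y : Fin 3 ⊕ Fin 3 → ℝ) :
    bra (x ∘ (finSumFinEquiv (m := 3) (n := 3)).symm)
        (y ∘ (finSumFinEquiv (m := 3) (n := 3)).symm) =
      cotangentBracket x y ∘ (finSumFinEquiv (m := 3) (n := 3)).symm := by
  ext i
  fin_cases i <;> rfl

/-- A linear bijection of `T*𝔥₃`, written blockwise as `[[A, C],[B, D]]`, is a Lie algebra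
automorphism iff `C = 0`, `A` is invertible and `D = (det A) • A⁻ᵀ` (with `B` arbitrary). -/
theorem stmt_0 (A C B D : Matrix (Fin 3) (Fin 3) ℝ)
    (F : Matrix (Fin 6) (Fin 6) ℝ)
    (hF : F = Matrix.reindex finSumFinEquiv finSumFinEquiv (Matrix.fromBlocks A C B D)) :
    (Function.Bijective F.mulVec ∧
        ∀ x y : Fin 6 → ℝ, F.mulVec (bra x y) = bra (F.mulVec x) (F.mulVec y)) ↔
      (C = 0 ∧ IsUnit A.det ∧ D = A.det • (A⁻¹)ᵀ) := by
  rw [hF, bijective_reindex_mulVec_iff,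
    reindex_preserves_operation_iff _ bra_comp_finSumFinEquiv_symm, stmt_0_general]
end
end

section
/- Let S be a real symmetric 3×3 matrix all of whose eigenvalues are positive. Then there exists a real 3×3 matrix A with det A > 0 and Aᵀ·E₂₁·A = E₂₁ such that Aᵀ·S·A is a diagonal matrix with strictly positive diagonal entries. -/
open Matrix

noncomputable section

/-- `E₂₁ = diag(1,1,−1)`. -/
def E21 : Matrix (Fin 3) (Fin 3) ℝ := Matrix.diagonal ![1, 1, -1]

/-!
A congruence takes the positive definite `S` to the identity, and an orthogonal one then takes the
diagonal form `diag e` to some `diag d` without disturbing the identity. By Sylvester's law of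
inertia `d` and `e` have the same numbers of positive and of negative entries, so after permuting
the columns `d i` and `e i` have the same sign. Changing the sign of a column corrects the sign of
the determinant, and rescaling the columns by positive factors turns `diag d` into `diag e` and the
identity into a positive diagonal matrix.
-/

section Congruence

variable {m n : Type*} [Fintype m] [DecidableEq n]

theorem transpose_mul_mul_mul_diagonal [Fintype n] {R : Type*} [CommSemiring R]
    {M : Matrix m m R} {P : Matrix m n R} {d : n → R} (h : Pᵀ * M * P = diagonal d) (c : n → R) :
    (P * diagonal c)ᵀ * M * (P * diagonal c) = diagonal fun i ↦ c i * d i * c i := by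
  calc (P * diagonal c)ᵀ * M * (P * diagonal c)
      = diagonal c * (Pᵀ * M * P) * diagonal c := by
        simp only [transpose_mul, diagonal_transpose, Matrix.mul_assoc]
    _ = diagonal fun i ↦ c i * d i * c i := by
        rw [h, diagonal_mul_diagonal, diagonal_mul_diagonal]

theorem transpose_mul_mul_submatrix {l : Type*} [DecidableEq l] {R : Type*} [CommSemiring R]
    {M : Matrix m m R} {P : Matrix m n R} {d : n → R} (h : Pᵀ * M * P = diagonal d) (σ : l ≃ n) :
    (P.submatrix id σ)ᵀ * M * P.submatrix id σ = diagonal (d ∘ σ) := by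
  calc (P.submatrix id σ)ᵀ * M * P.submatrix id σ
      = (Pᵀ * M * P).submatrix σ σ := by
        ext i j
        simp only [mul_apply, transpose_apply, submatrix_apply, id_eq]
    _ = diagonal (d ∘ σ) := by rw [h, submatrix_diagonal_equiv]

theorem exists_sq_eq_one_and_det_mul_diagonal_pos [Fintype n] {R : Type*} [CommRing R]
    [LinearOrder R] [IsStrictOrderedRing R] {P : Matrix n n R} (hP : P.det ≠ 0) :
    ∃ ε : n → R, (∀ i, ε i ^ 2 = 1) ∧ 0 < (P * diagonal ε).det := by
  rcases hP.lt_or_gt with hneg | hpos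
  · obtain ⟨i₀⟩ : Nonempty n := by
      by_contra! hempty
      exact absurd hneg (by simp [det_isEmpty])
    refine ⟨Function.update 1 i₀ (-1), fun i ↦ ?_, ?_⟩
    · obtain rfl | hi := eq_or_ne i i₀ <;> simp [*]
    · simpa [det_mul, det_diagonal, Finset.prod_update_of_mem] using hneg
  · exact ⟨1, by simp, by simpa [← Pi.one_def] using hpos⟩

end Congruence

section SimultaneousDiagonalization

open scoped ComplexOrder MatrixOrder

variable {ι : Type*} [Fintype ι] [DecidableEq ι] {𝕜 : Type*} [RCLike 𝕜] {S M : Matrix ι ι 𝕜}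

theorem exists_conjTranspose_mul_mul_eq_one (hS : S.PosDef) :
    ∃ P : Matrix ι ι 𝕜, Pᴴ * S * P = 1 := by
  obtain ⟨B, rfl⟩ := CStarAlgebra.nonneg_iff_eq_star_mul_self.mp hS.posSemidef.nonneg
  have hB : IsUnit B.det := by
    have := (isUnit_iff_isUnit_det _).mp hS.isUnit
    rw [det_mul] at this
    exact isUnit_of_mul_isUnit_right this
  refine ⟨B⁻¹, ?_⟩
  calc B⁻¹ᴴ * (star B * B) * B⁻¹ = (B * B⁻¹)ᴴ * (B * B⁻¹) := by
        simp only [conjTranspose_mul, star_eq_conjTranspose, Matrix.mul_assoc]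
    _ = 1 := by rw [mul_nonsing_inv _ hB, conjTranspose_one, Matrix.one_mul]

theorem exists_conjTranspose_mul_mul_eq_one_and_eq_diagonal (hS : S.PosDef) (hM : M.IsHermitian) :
    ∃ (P : Matrix ι ι 𝕜) (d : ι → ℝ),
      Pᴴ * S * P = 1 ∧ Pᴴ * M * P = diagonal (RCLike.ofReal ∘ d) := by
  obtain ⟨Q, hQ⟩ := exists_conjTranspose_mul_mul_eq_one hS
  have hN : (Qᴴ * M * Q).IsHermitian := isHermitian_conjTranspose_mul_mul Q hM
  let U : Matrix ι ι 𝕜 := hN.eigenvectorUnitary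
  have congr_mul (X : Matrix ι ι 𝕜) : (Q * U)ᴴ * X * (Q * U) = Uᴴ * (Qᴴ * X * Q) * U := by
    simp only [conjTranspose_mul, Matrix.mul_assoc]
  refine ⟨Q * U, hN.eigenvalues, ?_, ?_⟩
  · rw [congr_mul, hQ, Matrix.mul_one]
    exact Unitary.coe_star_mul_self hN.eigenvectorUnitary
  · rw [congr_mul, ← hN.conjStarAlgAut_star_eigenvectorUnitary,
      Unitary.conjStarAlgAut_star_apply, star_eq_conjTranspose]

theorem posDef_of_forall_hasEigenvalue_pos (hS : S.IsHermitian)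
    (hpos : ∀ μ : ℝ, Module.End.HasEigenvalue (toLin' S) (μ : 𝕜) → 0 < μ) : S.PosDef := by
  refine hS.posDef_iff_eigenvalues_pos.mpr fun i ↦ hpos _ (.of_mem_spectrum ?_)
  rw [spectrum_toLin', hS.spectrum_eq_image_range]
  exact Set.mem_image_of_mem _ (Set.mem_range_self i)

end SimultaneousDiagonalization

section Inertia

variable {ι : Type*}

theorem weightedSumSquares_eq_dotProduct_mulVec [Fintype ι] [DecidableEq ι] {R : Type*} [CommRing R]
    (w v : ι → R) :
    QuadraticMap.weightedSumSquares R w v = v ⬝ᵥ diagonal w *ᵥ v := by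
  simp only [QuadraticMap.weightedSumSquares_apply, dotProduct, mulVec_diagonal, smul_eq_mul]
  exact Finset.sum_congr rfl fun i _ ↦ by ring

theorem equivalent_weightedSumSquares_of_transpose_mul_mul [Fintype ι] [DecidableEq ι]
    {R : Type*} [CommRing R] {P : Matrix ι ι R} {w d : ι → R} (hP : IsUnit P)
    (h : Pᵀ * diagonal w * P = diagonal d) :
    (QuadraticMap.weightedSumSquares R d).Equivalent (QuadraticMap.weightedSumSquares R w) := by
  refine ⟨⟨P.toLinearEquiv' hP.invertible, fun v ↦ ?_⟩⟩
  change QuadraticMap.weightedSumSquares R w (P *ᵥ v) = QuadraticMap.weightedSumSquares R d v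
  rw [weightedSumSquares_eq_dotProduct_mulVec, weightedSumSquares_eq_dotProduct_mulVec, ← h,
    ← mulVec_mulVec, ← mulVec_mulVec, dotProduct_mulVec v, vecMul_transpose]

theorem exists_equiv_comp_eq_of_ncard_fiber_eq {κ α : Type*} [Finite ι] [Finite κ]
    {f : ι → α} {g : κ → α} (h : ∀ a, {i | f i = a}.ncard = {j | g j = a}.ncard) :
    ∃ σ : ι ≃ κ, g ∘ σ = f :=
  ⟨.ofFiberEquiv fun a ↦ (Finite.card_eq.mp (h a)).some, funext (Equiv.ofFiberEquiv_map _)⟩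

theorem ncard_pos_add_ncard_neg_add_ncard_zero [Finite ι] {R : Type*} [Zero R] [LinearOrder R]
    (w : ι → R) :
    {i | 0 < w i}.ncard + {i | w i < 0}.ncard + {i | w i = 0}.ncard = Nat.card ι := by
  rw [← Set.ncard_union_eq, ← Set.ncard_union_eq, ← Set.ncard_univ]
  · congr 1
    ext i
    grind
  · grind
  · grind

theorem exists_perm_sign_eq_of_weightedSumSquares_equivalent [Fintype ι] {𝕜 : Type*} [Field 𝕜]
    [LinearOrder 𝕜] [IsStrictOrderedRing 𝕜] {w d : ι → 𝕜}
    (h : (QuadraticMap.weightedSumSquares 𝕜 d).Equivalent (QuadraticMap.weightedSumSquares 𝕜 w)) :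
    ∃ σ : Equiv.Perm ι, ∀ i, SignType.sign (d (σ i)) = SignType.sign (w i) := by
  have hpos : {i | 0 < w i}.ncard = {i | 0 < d i}.ncard := by
    rw [← QuadraticForm.sigPos_weightedSumSquares, ← h.sigPos_eq,
      QuadraticForm.sigPos_weightedSumSquares]
  have hneg : {i | w i < 0}.ncard = {i | d i < 0}.ncard := by
    rw [← QuadraticForm.sigNeg_weightedSumSquares, ← h.sigNeg_eq,
      QuadraticForm.sigNeg_weightedSumSquares]
  have hzero : {i | w i = 0}.ncard = {i | d i = 0}.ncard := by
    have := ncard_pos_add_ncard_neg_add_ncard_zero w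
    have := ncard_pos_add_ncard_neg_add_ncard_zero d
    lia
  suffices ∃ σ : Equiv.Perm ι, (SignType.sign ∘ d) ∘ σ = SignType.sign ∘ w from
    this.imp fun σ hσ i ↦ congrFun hσ i
  refine exists_equiv_comp_eq_of_ncard_fiber_eq fun a ↦ ?_
  cases a
  · simpa only [Function.comp_apply, SignType.zero_eq_zero, sign_eq_zero_iff] using hzero
  · simpa only [Function.comp_apply, SignType.neg_eq_neg_one, sign_eq_neg_one_iff] using hneg
  · simpa only [Function.comp_apply, SignType.pos_eq_one, sign_eq_one_iff] using hpos

end Inertia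

section DiagonalForm

theorem exists_pos_mul_mul_eq_of_sign_eq {a b : ℝ} (h : SignType.sign a = SignType.sign b) :
    ∃ c, 0 < c ∧ c * a * c = b := by
  obtain rfl | ha := eq_or_ne a 0
  · exact ⟨1, one_pos, by simpa using (sign_eq_zero_iff.mp (h.symm.trans sign_zero)).symm⟩
  · have hba : 0 < b / a := by
      rcases ha.lt_or_gt with hneg | hpos
      · exact div_pos_of_neg_of_neg (sign_eq_neg_one_iff.mp (h.symm.trans (sign_neg hneg))) hneg
      · exact div_pos (sign_eq_one_iff.mp (h.symm.trans (sign_pos hpos))) hpos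
    refine ⟨√(b / a), Real.sqrt_pos.mpr hba, ?_⟩
    rw [mul_right_comm, Real.mul_self_sqrt hba.le, div_mul_cancel₀ b ha]

variable {ι : Type*} [Fintype ι] [DecidableEq ι] {S : Matrix ι ι ℝ}

theorem exists_det_pos_and_eq_one_and_eq_diagonal_sign_eq (hS : S.PosDef) (e : ι → ℝ) :
    ∃ (P : Matrix ι ι ℝ) (d : ι → ℝ), 0 < P.det ∧ Pᵀ * S * P = 1 ∧
      Pᵀ * diagonal e * P = diagonal d ∧ ∀ i, SignType.sign (d i) = SignType.sign (e i) := by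
  obtain ⟨Q, d, hQS, hQe⟩ :=
    exists_conjTranspose_mul_mul_eq_one_and_eq_diagonal hS (isHermitian_diagonal e)
  rw [conjTranspose_eq_transpose_of_trivial] at hQS hQe
  replace hQe : Qᵀ * diagonal e * Q = diagonal d := hQe
  have hQ : IsUnit Q := .of_mul_eq_one_right _ hQS
  obtain ⟨σ, hσ⟩ := exists_perm_sign_eq_of_weightedSumSquares_equivalent
    (equivalent_weightedSumSquares_of_transpose_mul_mul hQ hQe)
  have hQσS := transpose_mul_mul_submatrix (hQS.trans diagonal_one.symm) σ
  have hQσe := transpose_mul_mul_submatrix hQe σ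
  have hQσ : (Q.submatrix id σ).det ≠ 0 := by
    simpa [det_permute'] using ((isUnit_iff_isUnit_det Q).mp hQ).ne_zero
  obtain ⟨ε, hε, hdet⟩ := exists_sq_eq_one_and_det_mul_diagonal_pos hQσ
  have hconj (a : ι → ℝ) : (fun i ↦ ε i * a i * ε i) = a :=
    funext fun i ↦ by rw [mul_right_comm, ← sq, hε, one_mul]
  refine ⟨Q.submatrix id σ * diagonal ε, d ∘ σ, hdet, ?_, ?_, hσ⟩
  · rw [transpose_mul_mul_mul_diagonal hQσS, hconj]
    exact diagonal_one
  · rw [transpose_mul_mul_mul_diagonal hQσe, hconj]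

theorem stmt_1_general (hS : S.PosDef) (e : ι → ℝ) :
    ∃ A : Matrix ι ι ℝ, 0 < A.det ∧ Aᵀ * diagonal e * A = diagonal e ∧
      ∃ d : ι → ℝ, (∀ i, 0 < d i) ∧ Aᵀ * S * A = diagonal d := by
  obtain ⟨P, d, hdet, hPS, hPe, hsign⟩ := exists_det_pos_and_eq_one_and_eq_diagonal_sign_eq hS e
  choose c hc hcd using fun i ↦ exists_pos_mul_mul_eq_of_sign_eq (hsign i)
  refine ⟨P * diagonal c, ?_, ?_, fun i ↦ c i * 1 * c i, fun i ↦ ?_,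
    transpose_mul_mul_mul_diagonal (hPS.trans diagonal_one.symm) c⟩
  · rw [det_mul, det_diagonal]
    exact mul_pos hdet (Finset.prod_pos fun i _ ↦ hc i)
  · rw [transpose_mul_mul_mul_diagonal hPe, funext hcd]
  · simpa only [mul_one] using mul_pos (hc i) (hc i)

end DiagonalForm

/-- A real symmetric `3×3` matrix with all eigenvalues positive can be diagonalized,
with strictly positive diagonal entries, by an element of `SO(2,1)`. -/
theorem stmt_1 (S : Matrix (Fin 3) (Fin 3) ℝ) (hsym : S.IsSymm)
    (hpos : ∀ μ : ℝ, Module.End.HasEigenvalue (Matrix.toLin' S) μ → 0 < μ) :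
    ∃ A : Matrix (Fin 3) (Fin 3) ℝ, 0 < A.det ∧ Aᵀ * E21 * A = E21 ∧
      ∃ d : Fin 3 → ℝ, (∀ i, 0 < d i) ∧ Aᵀ * S * A = Matrix.diagonal d :=
  stmt_1_general (posDef_of_forall_hasEigenvalue_pos (isHermitian_iff_isSymm.mpr hsym) hpos) _
end
end

section
/- Let S be a real symmetric 3×3 matrix of signature (2,1), and suppose the (in general non-symmetric) matrix E₂₁·S is diagonalizable over ℝ. Then there exists a real 3×3 matrix A with Aᵀ·E₂₁·A = E₂₁ such that Aᵀ·S·A = diag(λ₁,λ₂,λ₃), where exactly two of λ₁,λ₂,λ₃ are positive and one is negative. -/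
open Matrix

noncomputable section

/-!
For `S` symmetric, the operator `E₂₁S` is self-adjoint for the bilinear form `E₂₁`, because
`E₂₁(E₂₁S) = S`. Its eigenspaces are therefore mutually `E₂₁`-orthogonal, and as they span the
space, `E₂₁`-orthogonal bases of them form together a basis of eigenvectors in which both `E₂₁` and
`S` are diagonal. By Sylvester's law of inertia the diagonal entries of `E₂₁` in this basis have the
signs `+, +, -` in some order, so permuting and rescaling the basis gives an element of `O(2,1)`,
and inertia applied to `S` gives the signs of the `λᵢ`.
-/

open Module

section OrthogonalEigenbasis

variable {K V : Type*} [Field K] [AddCommGroup V] [Module K V]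
  {B : LinearMap.BilinForm K V} {T : End K V}

theorem apply_eq_zero_of_mem_eigenspace_of_ne (hT : B.IsSelfAdjoint T) {μ ν : K} (hμν : μ ≠ ν)
    {x y : V} (hx : x ∈ T.eigenspace μ) (hy : y ∈ T.eigenspace ν) : B x y = 0 := by
  have hxy : μ * B x y = ν * B x y := by
    simpa [End.mem_eigenspace_iff.mp hx, End.mem_eigenspace_iff.mp hy] using hT x y
  by_contra hB
  exact hμν (mul_right_cancel₀ hB hxy)

theorem iSup_eigenspace_eq_top_of_basis {ι : Type*} (b : Basis ι K V) {d : ι → K}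
    (hb : ∀ i, T (b i) = d i • b i) : ⨆ μ, T.eigenspace μ = ⊤ := by
  rw [eq_top_iff, ← b.span_eq, Submodule.span_le, Set.range_subset_iff]
  exact fun i ↦ le_iSup T.eigenspace (d i) (End.mem_eigenspace_iff.mpr (hb i))

theorem exists_orthogonal_eigenbasis [Invertible (2 : K)] {ι : Type*} [Finite ι]
    (hB : B.IsSymm) (hT : B.IsSelfAdjoint T) (b : Basis ι K V) {d : ι → K}
    (hb : ∀ i, T (b i) = d i • b i) :
    ∃ v : Basis ι K V, B.IsOrthoᵢ v ∧ ∃ e : ι → K, ∀ i, T (v i) = e i • v i := by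
  classical
  have := b.finiteDimensional_of_finite
  have hsum : DirectSum.IsInternal T.eigenspace :=
    DirectSum.isInternal_submodule_of_iSupIndep_of_iSup_eq_top T.eigenspaces_iSupIndep
      (iSup_eigenspace_eq_top_of_basis b hb)
  choose u hu using fun μ ↦
    LinearMap.BilinForm.exists_orthogonal_basis
      (LinearMap.BilinForm.isSymm_iff.mp (hB.restrict (T.eigenspace μ)))
  have huB : B.IsOrthoᵢ (hsum.collectedBasis u) := by
    rintro ⟨μ, i⟩ ⟨ν, j⟩ hij
    obtain rfl | hμν := eq_or_ne μ ν
    · have hne : i ≠ j := by rintro rfl; exact hij rfl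
      simpa [Function.onFun] using hu μ hne
    · have hi : hsum.collectedBasis u ⟨μ, i⟩ ∈ T.eigenspace μ := hsum.collectedBasis_mem u ⟨μ, i⟩
      have hj : hsum.collectedBasis u ⟨ν, j⟩ ∈ T.eigenspace ν := hsum.collectedBasis_mem u ⟨ν, j⟩
      exact apply_eq_zero_of_mem_eigenspace_of_ne hT hμν hi hj
  let σ := (hsum.collectedBasis u).indexEquiv b
  refine ⟨(hsum.collectedBasis u).reindex σ, fun i j hij ↦ ?_, fun i ↦ (σ.symm i).1, fun i ↦ ?_⟩
  · simpa only [Function.onFun, Basis.reindex_apply] using huB (σ.symm.injective.ne hij)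
  · rw [Basis.reindex_apply]
    exact End.mem_eigenspace_iff.mp (hsum.collectedBasis_mem u _)

end OrthogonalEigenbasis

theorem exists_perm_apply_eq_of_ncard_fiber_eq {α γ : Type*} [Finite α] {f g : α → γ}
    (h : ∀ c, {a | f a = c}.ncard = {a | g a = c}.ncard) :
    ∃ σ : Equiv.Perm α, ∀ a, f a = g (σ a) :=
  ⟨Equiv.ofFiberEquiv fun c ↦ (Finite.card_eq.mp (h c)).some,
    fun a ↦ (Equiv.ofFiberEquiv_map _ a).symm⟩

theorem sum_ncard_fiber {α γ : Type*} [Finite α] [Fintype γ] (f : α → γ) :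
    ∑ c, {a | f a = c}.ncard = Nat.card α :=
  Nat.card_sigma.symm.trans (Nat.card_congr (Equiv.sigmaFiberEquiv f))

theorem exists_perm_signType_eq_of_ncard_eq {α : Type*} [Finite α] {f g : α → SignType}
    (hneg : {a | f a = -1}.ncard = {a | g a = -1}.ncard)
    (hpos : {a | f a = 1}.ncard = {a | g a = 1}.ncard) :
    ∃ σ : Equiv.Perm α, ∀ a, f a = g (σ a) := by
  have hsplit (x : SignType → ℕ) : ∑ c, x c = x 0 + (x (-1) + x 1) := rfl
  have hzero : {a | f a = 0}.ncard = {a | g a = 0}.ncard := by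
    have hf := sum_ncard_fiber f
    have hg := sum_ncard_fiber g
    rw [hsplit] at hf hg
    omega
  refine exists_perm_apply_eq_of_ncard_fiber_eq ?_
  rintro (_ | _ | _)
  exacts [hzero, hneg, hpos]

theorem exists_ne_zero_mul_mul_eq_of_sign_eq {x y : ℝ} (h : SignType.sign x = SignType.sign y) :
    ∃ s : ℝ, s ≠ 0 ∧ s * x * s = y := by
  obtain rfl | hx := eq_or_ne x 0
  · exact ⟨1, one_ne_zero, by simpa using (sign_eq_zero_iff.mp (h.symm.trans sign_zero)).symm⟩
  · have hyx : 0 < y / x := by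
      rw [← sign_eq_one_iff, div_eq_mul_inv, sign_mul, ← h]
      obtain hx | hx := hx.lt_or_gt <;> simp [hx]
    refine ⟨√(y / x), (Real.sqrt_pos.mpr hyx).ne', ?_⟩
    rw [mul_right_comm, Real.mul_self_sqrt hyx.le, div_mul_cancel₀ _ hx]

section Congruence

variable {n : Type*} [Fintype n] [DecidableEq n]

theorem exists_basis_toLin'_apply_eq_smul {K : Type*} [Field K] {T P : Matrix n n K}
    (hP : IsUnit P.det) {d : n → K} (hd : P⁻¹ * T * P = diagonal d) :
    ∃ b : Basis n K (n → K), ∀ i, toLin' T (b i) = d i • b i := by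
  let e := P.toLinearEquiv' (P.invertibleOfIsUnitDet hP)
  refine ⟨(Pi.basisFun K n).map e, fun i ↦ ?_⟩
  have hTP : T * P = P * diagonal d := by
    rw [← hd, Matrix.mul_assoc P⁻¹, mul_nonsing_inv_cancel_left _ _ hP]
  have hei : e (Pi.basisFun K n i) = P.col i := by
    rw [Pi.basisFun_apply]
    exact mulVec_single_one P i
  have hcol : T *ᵥ P.col i = d i • P.col i := by
    ext j
    exact (congrFun₂ hTP j i).trans ((mul_diagonal ..).trans (mul_comm ..))
  rw [Basis.map_apply, hei, toLin'_apply, hcol]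

theorem toMatrix_eq_diagonal_of_isOrthoᵢ {K V : Type*} [CommRing K] [AddCommGroup V] [Module K V]
    {B : LinearMap.BilinForm K V} {v : Basis n K V} (hv : B.IsOrthoᵢ v) :
    LinearMap.BilinForm.toMatrix v B = diagonal fun i ↦ B (v i) (v i) := by
  ext i j
  rw [LinearMap.BilinForm.toMatrix_apply]
  obtain rfl | hij := eq_or_ne i j
  · rw [diagonal_apply_eq]
  · rw [diagonal_apply_ne _ hij]
    exact hv hij

theorem transpose_toMatrix_mul_mul_toMatrix {K : Type*} [CommRing K] (v : Basis n K (n → K))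
    (M : Matrix n n K) :
    ((Pi.basisFun K n).toMatrix v)ᵀ * M * (Pi.basisFun K n).toMatrix v =
      LinearMap.BilinForm.toMatrix v (toBilin' M) := by
  rw [← LinearMap.BilinForm.toMatrix_mul_basis_toMatrix (Pi.basisFun K n),
    LinearMap.BilinForm.toMatrix_basisFun, LinearMap.BilinForm.toMatrix'_toBilin']

theorem exists_congr_diagonal_of_isSelfAdjoint {K : Type*} [Field K] [Invertible (2 : K)]
    {E T P : Matrix n n K} (hE : E.IsSymm) (hT : E.IsSelfAdjoint T) (hP : IsUnit P.det)
    {d : n → K} (hd : P⁻¹ * T * P = diagonal d) :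
    ∃ R : Matrix n n K, IsUnit R.det ∧ ∃ g h : n → K,
      Rᵀ * E * R = diagonal g ∧ Rᵀ * (E * T) * R = diagonal h := by
  obtain ⟨b, hb⟩ := exists_basis_toLin'_apply_eq_smul hP hd
  have hTE : (toBilin' E).IsSelfAdjoint (toLin' T) := (isAdjointPair_toLinearMap₂' E E T T).mpr hT
  obtain ⟨v, hvE, e, he⟩ :=
    exists_orthogonal_eigenbasis (Matrix.isSymm_toBilin'_iff_isSymm.mpr hE) hTE b hb
  have hET (i j : n) : toBilin' (E * T) (v i) (v j) = e j * toBilin' E (v i) (v j) := by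
    rw [toBilin'_apply', ← mulVec_mulVec, ← toLin'_apply T, he j, mulVec_smul, dotProduct_smul,
      smul_eq_mul, toBilin'_apply']
  have hvET : (toBilin' (E * T)).IsOrthoᵢ v := fun i j hij ↦
    (hET i j).trans (mul_eq_zero_of_right _ (hvE hij))
  exact ⟨(Pi.basisFun K n).toMatrix v, Basis.isUnit_det _ v, _, _,
    (transpose_toMatrix_mul_mul_toMatrix v E).trans (toMatrix_eq_diagonal_of_isOrthoᵢ hvE),
    (transpose_toMatrix_mul_mul_toMatrix v _).trans (toMatrix_eq_diagonal_of_isOrthoᵢ hvET)⟩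

theorem weightedSumSquares_equivalent_of_congr {K : Type*} [CommRing K] {C : Matrix n n K}
    (hC : IsUnit C.det) {a b : n → K} (h : Cᵀ * diagonal a * C = diagonal b) :
    (QuadraticMap.weightedSumSquares K b).Equivalent (QuadraticMap.weightedSumSquares K a) := by
  refine ⟨⟨C.toLinearEquiv' (C.invertibleOfIsUnitDet hC), fun x ↦ ?_⟩⟩
  have hquad (c : n → K) (y : n → K) :
      QuadraticMap.weightedSumSquares K c y = y ⬝ᵥ diagonal c *ᵥ y := by
    simp only [QuadraticMap.weightedSumSquares_apply, dotProduct, mulVec_diagonal, smul_eq_mul]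
    exact Finset.sum_congr rfl fun i _ ↦ by ring
  rw [hquad b, ← h, ← mulVec_mulVec, ← mulVec_mulVec, mulVec_transpose, dotProduct_comm,
    ← dotProduct_mulVec, dotProduct_comm]
  exact hquad a (C *ᵥ x)

theorem exists_perm_sign_eq_of_congr {K : Type*} [Field K] [LinearOrder K]
    [IsStrictOrderedRing K] {C : Matrix n n K} (hC : IsUnit C.det) {a b : n → K}
    (h : Cᵀ * diagonal a * C = diagonal b) :
    ∃ σ : Equiv.Perm n, ∀ i, SignType.sign (b i) = SignType.sign (a (σ i)) := by
  have hequiv := weightedSumSquares_equivalent_of_congr hC h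
  apply exists_perm_signType_eq_of_ncard_eq (f := fun i ↦ SignType.sign (b i))
    (g := fun i ↦ SignType.sign (a i))
  · simp only [sign_eq_neg_one_iff]
    rw [← QuadraticForm.sigNeg_weightedSumSquares, hequiv.sigNeg_eq,
      QuadraticForm.sigNeg_weightedSumSquares]
  · simp only [sign_eq_one_iff]
    rw [← QuadraticForm.sigPos_weightedSumSquares, hequiv.sigPos_eq,
      QuadraticForm.sigPos_weightedSumSquares]

theorem transpose_submatrix_mul_diagonal_congr {K : Type*} [CommRing K]
    {R M : Matrix n n K} {m : n → K}
    (hM : Rᵀ * M * R = diagonal m) (σ : Equiv.Perm n) (s : n → K) :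
    (R.submatrix id σ * diagonal s)ᵀ * M * (R.submatrix id σ * diagonal s) =
      diagonal fun i ↦ s i * m (σ i) * s i := by
  have hσ : (R.submatrix id σ)ᵀ * M * R.submatrix id σ = diagonal (m ∘ σ) := by
    rw [← submatrix_diagonal_equiv, ← hM]
    rfl
  calc
    _ = diagonal s * ((R.submatrix id σ)ᵀ * M * R.submatrix id σ) * diagonal s := by
      simp only [transpose_mul, diagonal_transpose, Matrix.mul_assoc]
    _ = _ := by
      rw [hσ, diagonal_mul_diagonal, diagonal_mul_diagonal]
      rfl

theorem exists_isometry_congr_diagonal {R S : Matrix n n ℝ} {η g h : n → ℝ} (hR : IsUnit R.det)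
    (hη : Rᵀ * diagonal η * R = diagonal g) (hS : Rᵀ * S * R = diagonal h) :
    ∃ A : Matrix n n ℝ, IsUnit A.det ∧ Aᵀ * diagonal η * A = diagonal η ∧
      ∃ lam : n → ℝ, Aᵀ * S * A = diagonal lam := by
  obtain ⟨σ, hσ⟩ := exists_perm_sign_eq_of_congr hR hη
  have hsign (i : n) : SignType.sign (g (σ.symm i)) = SignType.sign (η i) := by
    rw [hσ, σ.apply_symm_apply]
  choose s hs hsη using fun i ↦ exists_ne_zero_mul_mul_eq_of_sign_eq (hsign i)
  refine ⟨R.submatrix id σ.symm * diagonal s, ?_, ?_, _,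
    transpose_submatrix_mul_diagonal_congr hS σ.symm s⟩
  · rw [det_mul, det_permute', det_diagonal]
    exact (((Equiv.Perm.sign σ.symm).isUnit.map (Int.castRingHom ℝ)).mul hR).mul
      (Finset.prod_ne_zero_iff.mpr fun i _ ↦ hs i).isUnit
  · rw [transpose_submatrix_mul_diagonal_congr hη σ.symm s, funext hsη]

theorem stmt_2_general {η μ : n → ℝ} {S T : Matrix n n ℝ} (hT : diagonal η * T = S)
    (hsig : ∃ Q : Matrix n n ℝ, IsUnit Q.det ∧ Qᵀ * S * Q = diagonal μ)
    (hdiag : ∃ P : Matrix n n ℝ, IsUnit P.det ∧ ∃ d : n → ℝ, P⁻¹ * T * P = diagonal d) :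
    ∃ A : Matrix n n ℝ, IsUnit A.det ∧ Aᵀ * diagonal η * A = diagonal η ∧
      ∃ lam : n → ℝ, Aᵀ * S * A = diagonal lam ∧
        ∃ σ : Equiv.Perm n, ∀ i, SignType.sign (lam i) = SignType.sign (μ (σ i)) := by
  obtain ⟨Q, hQ, hQS⟩ := hsig
  obtain ⟨P, hP, d, hd⟩ := hdiag
  have hSμ : (Q⁻¹)ᵀ * diagonal μ * Q⁻¹ = S := by
    rw [← hQS, transpose_nonsing_inv, Matrix.mul_assoc, mul_nonsing_inv_cancel_right _ _ hQ,
      nonsing_inv_mul_cancel_left _ _ (isUnit_det_transpose Q hQ)]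
  have hS : S.IsSymm := by
    rw [← hSμ, IsSymm, transpose_mul, transpose_mul, transpose_transpose, diagonal_transpose,
      Matrix.mul_assoc]
  have hTself : (diagonal η).IsSelfAdjoint T := by
    rw [Matrix.IsSelfAdjoint, Matrix.IsAdjointPair, hT, ← hS, ← hT, transpose_mul,
      diagonal_transpose]
  obtain ⟨R, hR, g, h, hRη, hRS⟩ :=
    exists_congr_diagonal_of_isSelfAdjoint (isSymm_diagonal η) hTself hP hd
  obtain ⟨A, hA, hAη, lam, hlam⟩ := exists_isometry_congr_diagonal hR hRη (hT ▸ hRS)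
  refine ⟨A, hA, hAη, lam, hlam, exists_perm_sign_eq_of_congr (C := Q⁻¹ * A) ?_ ?_⟩
  · rw [det_mul]
    exact (isUnit_nonsing_inv_det Q hQ).mul hA
  · rw [← hlam, ← hSμ, transpose_mul]
    simp only [Matrix.mul_assoc]

end Congruence

theorem E21_mul_self : E21 * E21 = 1 := by
  rw [E21, diagonal_mul_diagonal, diagonal_eq_one]
  ext i
  fin_cases i <;> simp

/-- A real symmetric `3×3` matrix `S` of signature `(2,1)` (i.e. congruent to `E₂₁`)
such that `E₂₁·S` is diagonalizable over `ℝ` can be diagonalized by an element of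
`O(2,1)`, with exactly two positive and one negative diagonal entry. -/
theorem stmt_2 (S : Matrix (Fin 3) (Fin 3) ℝ) (hsym : S.IsSymm)
    (hsig : ∃ Q : Matrix (Fin 3) (Fin 3) ℝ, IsUnit Q.det ∧ Qᵀ * S * Q = E21)
    (hdiag : ∃ P : Matrix (Fin 3) (Fin 3) ℝ, IsUnit P.det ∧
      ∃ d : Fin 3 → ℝ, P⁻¹ * (E21 * S) * P = Matrix.diagonal d) :
    ∃ A : Matrix (Fin 3) (Fin 3) ℝ, Aᵀ * E21 * A = E21 ∧
      ∃ lam : Fin 3 → ℝ, Aᵀ * S * A = Matrix.diagonal lam ∧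
        ∃ i : Fin 3, lam i < 0 ∧ ∀ j, j ≠ i → 0 < lam j := by
  have hE : E21 * (E21 * S) = S := by rw [← Matrix.mul_assoc, E21_mul_self, Matrix.one_mul]
  obtain ⟨A, -, hA, lam, hlam, σ, hσ⟩ := stmt_2_general hE hsig hdiag
  refine ⟨A, hA, lam, hlam, σ.symm 2, ?_, fun j hj ↦ ?_⟩
  · rw [← sign_eq_neg_one_iff, hσ, σ.apply_symm_apply]
    simp
  · have hpos (k : Fin 3) (hk : k ≠ 2) : 0 < (![1, 1, -1] : Fin 3 → ℝ) k := by
      fin_cases k <;> simp_all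
    rw [← sign_eq_one_iff, hσ, sign_eq_one_iff]
    exact hpos _ fun h ↦ hj (σ.eq_symm_apply.mpr h)
end
end

section
/- An invertible real 3×3 matrix M satisfies Mᵀ·E₂₀·M = E₂₀ if and only if M has the form [[λ, a, b],[0, cos φ, ∓sin φ],[0, sin φ, ±cos φ]] for some λ ≠ 0, a, b, φ ∈ ℝ; equivalently, if and only if the entries M₂₁ and M₃₁ vanish, M₁₁ ≠ 0, and the lower-right 2×2 block of M is an orthogonal matrix. -/
open Matrix

noncomputable section

/-- `E₂₀ = diag(0,1,1)`. -/
def E20 : Matrix (Fin 3) (Fin 3) ℝ := Matrix.diagonal ![0, 1, 1]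

/-!
In block form `M = [[A, B], [C, D]]` and `E = [[0, 0], [0, 1]]`, the equation `Mᵀ E M = E` contains
`Dᵀ D = 1` and `Dᵀ C = 0`. The square matrix `Dᵀ` is then invertible, so `C = 0`. A `2 × 2` matrix
`D` with `Dᵀ D = 1` has `adj D = det D • Dᵀ` with `det D = ±1`; this expresses the second column
through the first, which is a point of the unit circle.
-/

theorem transpose_mul_fromBlocks_zero_one_mul_self_eq_iff {l m R : Type*} [Fintype l]
    [Fintype m] [DecidableEq m] [CommSemiring R]
    {A : Matrix l l R} {B : Matrix l m R} {C : Matrix m l R} {D : Matrix m m R} :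
    (fromBlocks A B C D)ᵀ * fromBlocks 0 0 0 1 * fromBlocks A B C D = fromBlocks 0 0 0 1 ↔
      C = 0 ∧ Dᵀ * D = 1 := by
  simp only [fromBlocks_transpose, fromBlocks_multiply, fromBlocks_inj, Matrix.mul_zero,
    Matrix.mul_one, Matrix.zero_mul, add_zero, zero_add]
  constructor
  · rintro ⟨-, -, hDC, hDD⟩
    refine ⟨?_, hDD⟩
    calc C = D * Dᵀ * C := by rw [mul_eq_one_comm.mp hDD, Matrix.one_mul]
      _ = 0 := by rw [Matrix.mul_assoc, hDC, Matrix.mul_zero]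
  · rintro ⟨rfl, hDD⟩
    simp [hDD]

theorem adjugate_eq_det_smul_transpose {n R : Type*} [Fintype n] [DecidableEq n] [CommRing R]
    {A : Matrix n n R} (hA : Aᵀ * A = 1) : A.adjugate = A.det • Aᵀ := by
  calc A.adjugate = Aᵀ * A * A.adjugate := by rw [hA, Matrix.one_mul]
    _ = A.det • Aᵀ := by rw [Matrix.mul_assoc, mul_adjugate, Matrix.mul_smul, Matrix.mul_one]

theorem det_eq_one_or_neg_one_of_transpose_mul_self {n R : Type*} [Fintype n] [DecidableEq n]
    [CommRing R] [NoZeroDivisors R] {A : Matrix n n R} (hA : Aᵀ * A = 1) :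
    A.det = 1 ∨ A.det = -1 := by
  rw [← mul_self_eq_one_iff, ← det_one (n := n), ← hA, det_mul, det_transpose]

theorem fin_two_transpose_mul_self_eq_one_iff {R : Type*} [CommRing R] [NoZeroDivisors R]
    {A : Matrix (Fin 2) (Fin 2) R} :
    Aᵀ * A = 1 ↔ ∃ c s, c ^ 2 + s ^ 2 = 1 ∧ (A = !![c, -s; s, c] ∨ A = !![c, s; s, -c]) := by
  constructor
  · intro hA
    have hcol : A 0 0 ^ 2 + A 1 0 ^ 2 = 1 := by
      simpa [Matrix.mul_apply, Fin.sum_univ_two, sq] using congr_fun₂ hA 0 0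
    have hadj : !![A 1 1, -A 0 1; -A 1 0, A 0 0] = A.det • Aᵀ :=
      (adjugate_fin_two A).symm.trans (adjugate_eq_det_smul_transpose hA)
    have h01 : A 0 1 = -(A.det * A 1 0) := neg_eq_iff_eq_neg.mp (congr_fun₂ hadj 0 1)
    have h11 : A 1 1 = A.det * A 0 0 := congr_fun₂ hadj 0 0
    have hA_eq : A = !![A 0 0, -(A.det * A 1 0); A 1 0, A.det * A 0 0] :=
      (eta_fin_two A).trans (by rw [h01, h11])
    refine ⟨A 0 0, A 1 0, hcol, ?_⟩
    rcases det_eq_one_or_neg_one_of_transpose_mul_self hA with hdet | hdet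
    · left
      simpa [hdet] using hA_eq
    · right
      simpa [hdet] using hA_eq
  · rintro ⟨c, s, hcs, rfl | rfl⟩ <;>
      simp [one_fin_two, ← hcs, sq, mul_comm, add_comm, ← Matrix.ext_iff, Matrix.mul_apply,
        Fin.forall_fin_two]

theorem exists_cos_sin_eq {x y : ℝ} (h : x ^ 2 + y ^ 2 = 1) :
    ∃ φ : ℝ, Real.cos φ = x ∧ Real.sin φ = y := by
  have hnorm : ‖(⟨x, y⟩ : ℂ)‖ = 1 := by
    rw [Complex.norm_def, Complex.normSq_mk, ← sq, ← sq, h, Real.sqrt_one]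
  obtain ⟨φ, hφ⟩ := (Complex.norm_eq_one_iff _).mp hnorm
  exact ⟨φ, by rw [← Complex.exp_ofReal_mul_I_re, hφ], by rw [← Complex.exp_ofReal_mul_I_im, hφ]⟩

theorem fin_two_transpose_mul_self_eq_one_iff_exists_cos_sin {A : Matrix (Fin 2) (Fin 2) ℝ} :
    Aᵀ * A = 1 ↔ ∃ φ, A = !![Real.cos φ, -Real.sin φ; Real.sin φ, Real.cos φ] ∨
      A = !![Real.cos φ, Real.sin φ; Real.sin φ, -Real.cos φ] := by
  rw [fin_two_transpose_mul_self_eq_one_iff]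
  constructor
  · rintro ⟨c, s, hcs, hA⟩
    obtain ⟨φ, rfl, rfl⟩ := exists_cos_sin_eq hcs
    exact ⟨φ, hA⟩
  · rintro ⟨φ, hA⟩
    exact ⟨Real.cos φ, Real.sin φ, Real.cos_sq_add_sin_sq φ, hA⟩

theorem submatrix_finSumFinEquiv_eq_fromBlocks {R : Type*} (M : Matrix (Fin 3) (Fin 3) R) :
    M.submatrix (finSumFinEquiv (m := 1) (n := 2)) (finSumFinEquiv (m := 1) (n := 2)) =
      fromBlocks !![M 0 0] !![M 0 1, M 0 2] !![M 1 0; M 2 0]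
        !![M 1 1, M 1 2; M 2 1, M 2 2] := by
  ext (i | i) (j | j) <;> fin_cases i <;> fin_cases j <;> rfl

theorem E20_submatrix_finSumFinEquiv :
    E20.submatrix (finSumFinEquiv (m := 1) (n := 2)) (finSumFinEquiv (m := 1) (n := 2)) =
      fromBlocks 0 0 0 1 := by
  rw [submatrix_finSumFinEquiv_eq_fromBlocks, fromBlocks_inj]
  simp [E20, ← Matrix.ext_iff, Fin.forall_fin_two]

theorem transpose_mul_E20_mul_self_eq_iff {M : Matrix (Fin 3) (Fin 3) ℝ} :
    Mᵀ * E20 * M = E20 ↔ M 1 0 = 0 ∧ M 2 0 = 0 ∧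
      (!![M 1 1, M 1 2; M 2 1, M 2 2])ᵀ * !![M 1 1, M 1 2; M 2 1, M 2 2] = 1 := by
  let e : Fin 1 ⊕ Fin 2 ≃ Fin 3 := finSumFinEquiv
  have hsub : Mᵀ * E20 * M = E20 ↔
      (M.submatrix e e)ᵀ * E20.submatrix e e * M.submatrix e e = E20.submatrix e e := by
    rw [transpose_submatrix, submatrix_mul_equiv, submatrix_mul_equiv]
    exact (reindex e.symm e.symm).injective.eq_iff.symm
  rw [hsub, E20_submatrix_finSumFinEquiv, submatrix_finSumFinEquiv_eq_fromBlocks,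
    transpose_mul_fromBlocks_zero_one_mul_self_eq_iff]
  simp [← Matrix.ext_iff, Fin.forall_fin_two, and_assoc]

theorem fin_three_eq_of_lower_block_eq {R : Type*} [Zero R] {M : Matrix (Fin 3) (Fin 3) R}
    {p q r s : R} (h10 : M 1 0 = 0) (h20 : M 2 0 = 0)
    (hblock : !![M 1 1, M 1 2; M 2 1, M 2 2] = !![p, q; r, s]) :
    M = !![M 0 0, M 0 1, M 0 2; 0, p, q; 0, r, s] := by
  obtain ⟨⟨h11, h12⟩, h21, h22⟩ : (M 1 1 = p ∧ M 1 2 = q) ∧ M 2 1 = r ∧ M 2 2 = s := by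
    simpa [← Matrix.ext_iff, Fin.forall_fin_two] using hblock
  calc M = !![M 0 0, M 0 1, M 0 2; M 1 0, M 1 1, M 1 2; M 2 0, M 2 1, M 2 2] := eta_fin_three M
    _ = !![M 0 0, M 0 1, M 0 2; 0, p, q; 0, r, s] := by rw [h10, h20, h11, h12, h21, h22]

/-- Characterization of the invertible `3×3` matrices preserving the degenerate quadratic
form `E₂₀ = diag(0,1,1)`: both as matrices `[[λ,a,b],[0,cos φ,∓sin φ],[0,sin φ,±cos φ]]`
and, equivalently, via vanishing of the entries `M₂₁, M₃₁`, `M₁₁ ≠ 0` and orthogonality of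
the lower-right `2×2` block. -/
theorem stmt_4 (M : Matrix (Fin 3) (Fin 3) ℝ) (hM : IsUnit M.det) :
    (Mᵀ * E20 * M = E20 ↔
      ∃ lam a b φ : ℝ, lam ≠ 0 ∧
        (M = !![lam, a, b; 0, Real.cos φ, -Real.sin φ; 0, Real.sin φ, Real.cos φ] ∨
         M = !![lam, a, b; 0, Real.cos φ, Real.sin φ; 0, Real.sin φ, -Real.cos φ])) ∧
    (Mᵀ * E20 * M = E20 ↔
      (M 1 0 = 0 ∧ M 2 0 = 0 ∧ M 0 0 ≠ 0 ∧
        (!![M 1 1, M 1 2; M 2 1, M 2 2])ᵀ * !![M 1 1, M 1 2; M 2 1, M 2 2] = 1)) := by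
  have h00 (h10 : M 1 0 = 0) (h20 : M 2 0 = 0) : M 0 0 ≠ 0 := fun h ↦
    hM.ne_zero <| det_eq_zero_of_column_eq_zero 0 <| by simp [Fin.forall_fin_succ, h, h10, h20]
  have hblock : Mᵀ * E20 * M = E20 ↔ M 1 0 = 0 ∧ M 2 0 = 0 ∧ M 0 0 ≠ 0 ∧
      (!![M 1 1, M 1 2; M 2 1, M 2 2])ᵀ * !![M 1 1, M 1 2; M 2 1, M 2 2] = 1 := by
    rw [transpose_mul_E20_mul_self_eq_iff]
    tauto
  refine ⟨?_, hblock⟩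
  rw [hblock, fin_two_transpose_mul_self_eq_one_iff_exists_cos_sin]
  constructor
  · rintro ⟨h10, h20, h00, φ, hφ⟩
    exact ⟨_, _, _, φ, h00, hφ.imp (fin_three_eq_of_lower_block_eq h10 h20)
      (fin_three_eq_of_lower_block_eq h10 h20)⟩
  · rintro ⟨lam, a, b, φ, hlam, rfl | rfl⟩
    · exact ⟨rfl, rfl, hlam, φ, .inl rfl⟩
    · exact ⟨rfl, rfl, hlam, φ, .inr rfl⟩
end
end

section
/- Let ⟨·,·⟩ be a nondegenerate symmetric bilinear form on T*𝔥₃ whose restriction to the derived algebra 𝔤′ = span(e₄,e₅,e₆) is positive definite (respectively negative definite). Then there exists a Lie algebra automorphism F of T*𝔥₃ and nonzero reals λ₁ ≥ λ₂ ≥ λ₃ such that the matrix of the form (x,y) ↦ ⟨Fx, Fy⟩ in the basis (e₁,…,e₆) is diag(λ₁,λ₂,λ₃,1,1,1) (respectively diag(λ₁,λ₂,λ₃,−1,−1,−1)). -/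
open Matrix

noncomputable section

/-- The derived algebra `𝔤′ = span(e₄,e₅,e₆)` of `T*𝔥₃`. -/
def gder : Submodule ℝ (Fin 6 → ℝ) :=
  Submodule.span ℝ {Pi.single 3 1, Pi.single 4 1, Pi.single 5 1}

/-- `F` is a Lie algebra automorphism of `T*𝔥₃` (as a matrix in the basis `e`). -/
def IsAuto (F : Matrix (Fin 6) (Fin 6) ℝ) : Prop :=
  Function.Bijective F.mulVec ∧
    ∀ x y : Fin 6 → ℝ, F.mulVec (bra x y) = bra (F.mulVec x) (F.mulVec y)

/-!
The bracket of `T*𝔥₃` is the cross product `span(e₁,e₂,e₃)² → 𝔤′`, so every invertible `A` on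
`span(e₁,e₂,e₃)` extends to automorphisms: these act by the cofactor matrix of `A` on `𝔤′`, and
their component `B` from `span(e₁,e₂,e₃)` to `𝔤′` is free. Write the form as blocks `P, Q, Qᵀ, R`,
with `ε⁻¹R` positive definite. Taking `B = -R⁻¹QᵀA` removes the off-diagonal blocks and replaces
`P` by `AᵀSA`, with `S = P - QR⁻¹Qᵀ` the Schur complement. The cofactor matrix of `A` brings `R` to
`ε` times the identity exactly when `AAᵀ = (det A)² ε⁻¹R`. A suitable multiple of a square root of
`ε⁻¹R` has this property, and multiplying it on the right by an orthogonal matrix keeps it; the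
spectral theorem chooses that orthogonal matrix so that `AᵀSA` becomes diagonal with decreasing
entries.
-/

lemma exists_unitaryGroup_conj_eq_diagonal_antitone {𝕜 : Type*} [RCLike 𝕜] {n : ℕ}
    {T : Matrix (Fin n) (Fin n) 𝕜} (hT : T.IsHermitian) :
    ∃ U ∈ unitaryGroup (Fin n) 𝕜, ∃ l : Fin n → ℝ, Antitone l ∧
      Uᴴ * T * U = diagonal fun i => (l i : 𝕜) := by
  let V : Matrix (Fin n) (Fin n) 𝕜 := hT.eigenvectorUnitary
  have hV : Vᴴ * V = 1 := Unitary.coe_star_mul_self hT.eigenvectorUnitary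
  have hdiag : Vᴴ * T * V = diagonal fun i => (hT.eigenvalues i : 𝕜) :=
    (Unitary.conjStarAlgAut_star_apply hT.eigenvectorUnitary T).symm.trans
      hT.conjStarAlgAut_star_eigenvectorUnitary
  let σ := Tuple.sort (OrderDual.toDual ∘ hT.eigenvalues)
  refine ⟨V.submatrix (Equiv.refl _) σ, ?_, hT.eigenvalues ∘ σ, fun i j hij =>
    Tuple.monotone_sort (OrderDual.toDual ∘ hT.eigenvalues) hij, ?_⟩
  · rw [mem_unitaryGroup_iff', star_eq_conjTranspose, conjTranspose_submatrix,
      submatrix_mul_equiv, hV, submatrix_one_equiv]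
  · calc (V.submatrix (Equiv.refl _) σ)ᴴ * T * V.submatrix (Equiv.refl _) σ
        = Vᴴ.submatrix σ (Equiv.refl _) * T.submatrix (Equiv.refl _) (Equiv.refl _) *
            V.submatrix (Equiv.refl _) σ := rfl
      _ = (diagonal fun i => (hT.eigenvalues i : 𝕜)).submatrix σ σ := by
          rw [submatrix_mul_equiv, submatrix_mul_equiv, hdiag]
      _ = diagonal fun i => ((hT.eigenvalues ∘ σ) i : 𝕜) := submatrix_diagonal_equiv _ σ

lemma exists_mul_transpose_eq_of_posDef {n : Type*} [Fintype n] {R : Matrix n n ℝ}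
    (hR : R.PosDef) : ∃ M : Matrix n n ℝ, M * Mᵀ = R := by
  classical
  open scoped MatrixOrder in
  obtain ⟨N, hN⟩ := CStarAlgebra.nonneg_iff_eq_star_mul_self.mp hR.posSemidef.nonneg
  refine ⟨Nᵀ, ?_⟩
  rw [hN, star_eq_conjTranspose, conjTranspose_eq_transpose_of_trivial, transpose_transpose]

lemma exists_mul_transpose_eq_det_sq_smul {n : Type*} [Fintype n] [DecidableEq n]
    (hn : Fintype.card n ≠ 1) {R : Matrix n n ℝ} (hR : R.PosDef) :
    ∃ A : Matrix n n ℝ, A.det ≠ 0 ∧ A * Aᵀ = A.det ^ 2 • R := by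
  obtain ⟨M, hM⟩ := exists_mul_transpose_eq_of_posDef hR
  have hdet : 0 < R.det := hR.det_pos
  -- For `A = √c • M`, the claim `A * Aᵀ = A.det ^ 2 • R` amounts to `c = c ^ n * R.det`.
  let s : ℝ := (1 - Fintype.card n : ℝ)⁻¹
  let c : ℝ := R.det ^ s
  have hc : 0 < c := Real.rpow_pos_of_pos hdet s
  have hs : s * Fintype.card n + 1 = s := by
    have hn' : (1 - Fintype.card n : ℝ) ≠ 0 := sub_ne_zero.mpr (by exact_mod_cast hn.symm)
    simp only [s]
    field_simp
    ring
  have hc_pow : c ^ Fintype.card n * R.det = c := by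
    rw [← Real.rpow_mul_natCast hdet.le, ← Real.rpow_add_one hdet.ne', hs]
  have hA : (√c • M) * (√c • M)ᵀ = c • R := by
    rw [transpose_smul, smul_mul_smul_comm, Real.mul_self_sqrt hc.le, hM]
  have hA_det : (√c • M).det ^ 2 = c := by
    have h := congrArg det hA
    rwa [det_mul, det_transpose, ← sq, det_smul R, hc_pow] at h
  refine ⟨√c • M, fun h => hc.ne' ?_, by rw [hA, hA_det]⟩
  rw [← hA_det, h, zero_pow two_ne_zero]

lemma exists_mul_transpose_eq_and_congr_eq_diagonal {n : ℕ} (hn : n ≠ 1)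
    {R S : Matrix (Fin n) (Fin n) ℝ} (hR : R.PosDef) (hS : S.IsSymm) :
    ∃ A : Matrix (Fin n) (Fin n) ℝ, A.det ≠ 0 ∧ A * Aᵀ = A.det ^ 2 • R ∧
      ∃ l : Fin n → ℝ, Antitone l ∧ Aᵀ * S * A = diagonal l := by
  obtain ⟨M, hM_det, hM⟩ := exists_mul_transpose_eq_det_sq_smul (by rwa [Fintype.card_fin]) hR
  have hMS : (Mᵀ * S * M).IsHermitian := by
    rw [isHermitian_iff_isSymm, IsSymm]
    simp only [transpose_mul, transpose_transpose, hS.eq, Matrix.mul_assoc]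
  obtain ⟨U, hU, l, hl, hdiag⟩ := exists_unitaryGroup_conj_eq_diagonal_antitone hMS
  have hUU : U * Uᵀ = 1 := mem_unitaryGroup_iff.mp hU
  have hU_det : U.det ^ 2 = 1 := by
    rw [sq, ← det_one (n := Fin n), ← hUU, det_mul, det_transpose]
  refine ⟨M * U, ?_, ?_, l, hl, ?_⟩
  · rw [det_mul]
    exact mul_ne_zero hM_det (pow_ne_zero_iff two_ne_zero |>.mp (hU_det ▸ one_ne_zero))
  · rw [det_mul, mul_pow, hU_det, mul_one, ← hM, transpose_mul, Matrix.mul_assoc,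
      ← Matrix.mul_assoc U, hUU, Matrix.one_mul]
  · rw [conjTranspose_eq_transpose_of_trivial] at hdiag
    simpa only [transpose_mul, Matrix.mul_assoc, RCLike.ofReal_real_eq_id, id] using hdiag

lemma adjugate_mul_mul_adjugate_transpose_eq_one {n K : Type*} [Fintype n] [DecidableEq n]
    [Field K] {A R : Matrix n n K} (hA : A.det ≠ 0) (h : A * Aᵀ = A.det ^ 2 • R) :
    A.adjugate * R * A.adjugateᵀ = 1 := by
  refine smul_right_injective _ (pow_ne_zero 2 hA) ?_
  calc A.det ^ 2 • (A.adjugate * R * A.adjugateᵀ)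
      = A.adjugate * (A * Aᵀ) * A.adjugateᵀ := by rw [h, Matrix.mul_smul, Matrix.smul_mul]
    _ = (A.adjugate * A) * (A.adjugate * A)ᵀ := by
        simp only [transpose_mul, Matrix.mul_assoc]
    _ = A.det ^ 2 • 1 := by
        rw [adjugate_mul, transpose_smul, transpose_one, smul_mul_smul_comm, Matrix.one_mul, sq]

lemma fromBlocks_congr_eq_schurComplement {m n K : Type*} [Fintype m] [Fintype n]
    [DecidableEq n] [CommRing K] (P : Matrix m m K) (Q : Matrix m n K) {R : Matrix n n K}
    (hR : R.IsSymm) (hR_det : IsUnit R.det) (A : Matrix m m K) (C : Matrix n n K) :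
    (fromBlocks A 0 (-(R⁻¹ * (Qᵀ * A))) C)ᵀ * fromBlocks P Q Qᵀ R *
        fromBlocks A 0 (-(R⁻¹ * (Qᵀ * A))) C =
      fromBlocks (Aᵀ * (P - Q * R⁻¹ * Qᵀ) * A) 0 0 (Cᵀ * R * C) := by
  have hRB : R * -(R⁻¹ * (Qᵀ * A)) = -(Qᵀ * A) := by
    rw [Matrix.mul_neg, mul_nonsing_inv_cancel_left _ _ hR_det]
  have hQB : P * A + Q * -(R⁻¹ * (Qᵀ * A)) = (P - Q * R⁻¹ * Qᵀ) * A := by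
    rw [Matrix.mul_neg, Matrix.sub_mul, ← sub_eq_add_neg, Matrix.mul_assoc, Matrix.mul_assoc]
  generalize -(R⁻¹ * (Qᵀ * A)) = B at hRB hQB ⊢
  have hBR : Bᵀ * R = -(Aᵀ * Q) := by
    simpa only [transpose_mul, transpose_neg, transpose_transpose, hR.eq]
      using congrArg transpose hRB
  have hGF : fromBlocks P Q Qᵀ R * fromBlocks A 0 B C =
      fromBlocks ((P - Q * R⁻¹ * Qᵀ) * A) (Q * C) 0 (R * C) := by
    rw [fromBlocks_multiply, hRB, hQB]
    simp only [Matrix.mul_zero, zero_add, add_neg_cancel]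
  have hQC : Aᵀ * (Q * C) + Bᵀ * (R * C) = 0 := by
    rw [← Matrix.mul_assoc, ← Matrix.mul_assoc, hBR, Matrix.neg_mul, add_neg_cancel]
  rw [Matrix.mul_assoc, hGF, fromBlocks_transpose, fromBlocks_multiply, hQC]
  simp only [transpose_zero, Matrix.mul_zero, Matrix.zero_mul, zero_add, add_zero,
    Matrix.mul_assoc]

lemma exists_fromBlocks_adjugate_congr_eq_diagonal {n : ℕ} (hn : n ≠ 1)
    {G : Matrix (Fin n ⊕ Fin n) (Fin n ⊕ Fin n) ℝ} (hG : G.IsSymm) {ε : ℝ} (hε : ε ≠ 0)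
    (hpos : (ε⁻¹ • G.toBlocks₂₂).PosDef) :
    ∃ A B : Matrix (Fin n) (Fin n) ℝ, A.det ≠ 0 ∧ ∃ l : Fin n → ℝ, Antitone l ∧
      (fromBlocks A 0 B A.adjugateᵀ)ᵀ * G * fromBlocks A 0 B A.adjugateᵀ =
        diagonal (l ⊕ᵥ fun _ => ε) := by
  let P := G.toBlocks₁₁
  let Q := G.toBlocks₁₂
  let R := G.toBlocks₂₂
  have hG_eq : G = fromBlocks P Q Qᵀ R := by
    have h21 : Qᵀ = G.toBlocks₂₁ := congrArg toBlocks₂₁ hG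
    rw [h21, fromBlocks_toBlocks]
  have hR_symm : R.IsSymm := hG.submatrix Sum.inr
  have hR_eq : R = ε • (ε⁻¹ • R) := (smul_inv_smul₀ hε R).symm
  have hR_det : IsUnit R.det := by
    rw [hR_eq, det_smul]
    exact (mul_ne_zero (pow_ne_zero _ hε) hpos.det_pos.ne').isUnit
  have hS : (P - Q * R⁻¹ * Qᵀ).IsSymm := by
    have hP : P.IsSymm := hG.submatrix Sum.inl
    rw [IsSymm, transpose_sub, hP.eq, transpose_mul, transpose_mul, transpose_nonsing_inv,
      hR_symm.eq, transpose_transpose, Matrix.mul_assoc]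
  obtain ⟨A, hA, hAR, l, hl, hAS⟩ := exists_mul_transpose_eq_and_congr_eq_diagonal hn hpos hS
  have hCR : A.adjugate * R * A.adjugateᵀ = diagonal fun _ => ε := by
    rw [hR_eq, Matrix.mul_smul, Matrix.smul_mul,
      adjugate_mul_mul_adjugate_transpose_eq_one hA hAR, smul_one_eq_diagonal]
  refine ⟨A, -(R⁻¹ * (Qᵀ * A)), hA, l, hl, ?_⟩
  rw [hG_eq, fromBlocks_congr_eq_schurComplement P Q hR_symm hR_det, hAS, transpose_transpose,
    hCR, fromBlocks_diagonal]

lemma adjugate_transpose_mulVec_crossProduct {K : Type*} [CommRing K]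
    (A : Matrix (Fin 3) (Fin 3) K) (u v : Fin 3 → K) :
    A.adjugateᵀ *ᵥ (u ⨯₃ v) = (A *ᵥ u) ⨯₃ (A *ᵥ v) := by
  ext i
  fin_cases i <;>
    simp [adjugate_fin_three, cross_apply, mulVec, dotProduct, Fin.sum_univ_three] <;> ring

/-- The splitting of the basis `(e₁,…,e₆)` into `(e₁,e₂,e₃)` and the basis `(e₄,e₅,e₆)`
of `𝔤′`. -/
abbrev basisSplit : Fin 3 ⊕ Fin 3 ≃ Fin 6 := finSumFinEquiv (m := 3) (n := 3)

lemma bra_comp_basisSplit_symm (w z : Fin 3 ⊕ Fin 3 → ℝ) :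
    bra (w ∘ basisSplit.symm) (z ∘ basisSplit.symm) =
      ((0 : Fin 3 → ℝ) ⊕ᵥ ((w ∘ Sum.inl) ⨯₃ (z ∘ Sum.inl))) ∘ basisSplit.symm := by
  ext i
  fin_cases i <;> rfl

lemma zero_sumElim_comp_basisSplit_symm_mem_gder (v : Fin 3 → ℝ) :
    ((0 : Fin 3 → ℝ) ⊕ᵥ v) ∘ basisSplit.symm ∈ gder := by
  have hv : ((0 : Fin 3 → ℝ) ⊕ᵥ v) ∘ basisSplit.symm =
      v 0 • Pi.single 3 1 + v 1 • Pi.single 4 1 + v 2 • Pi.single 5 1 := by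
    ext i
    fin_cases i <;> simp <;> rfl
  rw [hv]
  refine add_mem (add_mem ?_ ?_) ?_ <;>
    exact Submodule.smul_mem _ _ (Submodule.subset_span (by simp))

/-- The endomorphism of the Lie algebra `T*𝔥₃` that induces `A` on `T*𝔥₃ / 𝔤′` and has component
`B` from `span(e₁,e₂,e₃)` to `𝔤′`; the bracket forces the cofactor matrix of `A` on `𝔤′`. It is an
automorphism as soon as `A` is invertible, and `A`, `B` are the freedom available for diagonalizing
the form. -/
def blockAut (A B : Matrix (Fin 3) (Fin 3) ℝ) : Matrix (Fin 6) (Fin 6) ℝ :=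
  (fromBlocks A 0 B A.adjugateᵀ).submatrix basisSplit.symm basisSplit.symm

lemma blockAut_mulVec (A B : Matrix (Fin 3) (Fin 3) ℝ) (w : Fin 3 ⊕ Fin 3 → ℝ) :
    blockAut A B *ᵥ (w ∘ basisSplit.symm) =
      (A *ᵥ (w ∘ Sum.inl) ⊕ᵥ (B *ᵥ (w ∘ Sum.inl) + A.adjugateᵀ *ᵥ (w ∘ Sum.inr))) ∘
        basisSplit.symm := by
  rw [blockAut, submatrix_mulVec_equiv, Equiv.symm_symm, Function.comp_assoc,
    Equiv.symm_comp_self, Function.comp_id, fromBlocks_mulVec, zero_mulVec, add_zero]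

lemma blockAut_mulVec_bra (A B : Matrix (Fin 3) (Fin 3) ℝ) (x y : Fin 6 → ℝ) :
    blockAut A B *ᵥ bra x y = bra (blockAut A B *ᵥ x) (blockAut A B *ᵥ y) := by
  have hsplit (t : Fin 6 → ℝ) : ∃ w, w ∘ basisSplit.symm = t :=
    ⟨t ∘ basisSplit, by rw [Function.comp_assoc, Equiv.self_comp_symm, Function.comp_id]⟩
  obtain ⟨w, rfl⟩ := hsplit x
  obtain ⟨z, rfl⟩ := hsplit y
  simp only [bra_comp_basisSplit_symm, blockAut_mulVec, Sum.elim_comp_inl, Sum.elim_comp_inr,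
    mulVec_zero, zero_add, adjugate_transpose_mulVec_crossProduct]

lemma isAuto_blockAut {A : Matrix (Fin 3) (Fin 3) ℝ} (hA : A.det ≠ 0)
    (B : Matrix (Fin 3) (Fin 3) ℝ) : IsAuto (blockAut A B) := by
  have hdet : (blockAut A B).det ≠ 0 := by
    rw [blockAut, det_submatrix_equiv_self, det_fromBlocks_zero₁₂, det_transpose, det_adjugate]
    exact mul_ne_zero hA (pow_ne_zero _ hA)
  have hunit : IsUnit (blockAut A B) := (isUnit_iff_isUnit_det _).mpr hdet.isUnit
  exact ⟨⟨mulVec_injective_iff_isUnit.mpr hunit, mulVec_surjective_iff_isUnit.mpr hunit⟩,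
    blockAut_mulVec_bra A B⟩

lemma zero_sumElim_dotProduct_mulVec {m n K : Type*} [Fintype m] [Fintype n]
    [NonUnitalNonAssocSemiring K] (M : Matrix (m ⊕ n) (m ⊕ n) K) (v : n → K) :
    ((0 : m → K) ⊕ᵥ v) ⬝ᵥ M *ᵥ ((0 : m → K) ⊕ᵥ v) = v ⬝ᵥ M.toBlocks₂₂ *ᵥ v := by
  rw [← fromBlocks_toBlocks M, fromBlocks_mulVec, sumElim_dotProduct_sumElim, zero_dotProduct,
    zero_add, Sum.elim_comp_inl, Sum.elim_comp_inr, mulVec_zero, zero_add, toBlocks_fromBlocks₂₂]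

lemma posDef_inv_smul_of_pos_on_gder {G : Matrix (Fin 6) (Fin 6) ℝ} (hG : G.IsSymm) {ε : ℝ}
    (hdef : ∀ x ∈ gder, x ≠ 0 → 0 < ε * (x ⬝ᵥ G *ᵥ x)) :
    (ε⁻¹ • (G.submatrix basisSplit basisSplit).toBlocks₂₂).PosDef := by
  refine .of_dotProduct_mulVec_pos
    (isHermitian_iff_isSymm.mpr (((hG.submatrix _).submatrix _).smul _)) fun v hv => ?_
  let x : Fin 6 → ℝ := ((0 : Fin 3 → ℝ) ⊕ᵥ v) ∘ basisSplit.symm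
  have hx : x ≠ 0 := fun h => hv (funext fun i => by
    simpa [x] using congrFun h (basisSplit (Sum.inr i)))
  have hquad : v ⬝ᵥ (G.submatrix basisSplit basisSplit).toBlocks₂₂ *ᵥ v = x ⬝ᵥ G *ᵥ x := by
    rw [← zero_sumElim_dotProduct_mulVec, submatrix_mulVec_equiv, ← comp_equiv_symm_dotProduct]
  have hpos := hdef x (zero_sumElim_comp_basisSplit_symm_mem_gder v) hx
  have hε : ε ≠ 0 := left_ne_zero_of_mul hpos.ne'
  rw [smul_mulVec, dotProduct_smul, star_trivial, hquad, smul_eq_mul]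
  calc 0 < (ε * (x ⬝ᵥ G *ᵥ x)) / ε ^ 2 := by positivity
    _ = ε⁻¹ * (x ⬝ᵥ G *ᵥ x) := by field_simp

lemma exists_isAuto_congr_eq_diagonal {G : Matrix (Fin 6) (Fin 6) ℝ} (hG : G.IsSymm) {ε : ℝ}
    (hdef : ∀ x ∈ gder, x ≠ 0 → 0 < ε * (x ⬝ᵥ G *ᵥ x)) :
    ∃ F : Matrix (Fin 6) (Fin 6) ℝ, IsAuto F ∧ ∃ l : Fin 3 → ℝ, Antitone l ∧
      Fᵀ * G * F = diagonal ![l 0, l 1, l 2, ε, ε, ε] := by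
  let G' := G.submatrix basisSplit basisSplit
  have hpos : (ε⁻¹ • G'.toBlocks₂₂).PosDef := posDef_inv_smul_of_pos_on_gder hG hdef
  have hε : ε ≠ 0 := by
    rintro rfl
    simpa using hpos.diag_pos (i := 0)
  obtain ⟨A, B, hA, l, hl, hdiag⟩ :=
    exists_fromBlocks_adjugate_congr_eq_diagonal (by decide) (hG.submatrix basisSplit) hε hpos
  have hG_eq : G = G'.submatrix basisSplit.symm basisSplit.symm := by
    rw [submatrix_submatrix, Equiv.self_comp_symm, submatrix_id_id]
  have hdiag_entries : (l ⊕ᵥ fun _ => ε) ∘ basisSplit.symm = ![l 0, l 1, l 2, ε, ε, ε] := by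
    ext i
    fin_cases i <;> rfl
  refine ⟨blockAut A B, isAuto_blockAut hA B, l, hl, ?_⟩
  rw [hG_eq, blockAut, transpose_submatrix, submatrix_mul_equiv, submatrix_mul_equiv, hdiag,
    submatrix_diagonal_equiv, hdiag_entries]

lemma of_apply_mulVec_single_eq_congr {m n K : Type*} [Fintype m] [DecidableEq m] [Fintype n]
    [DecidableEq n] [CommRing K] (g : (m → K) →ₗ[K] (m → K) →ₗ[K] K) (F : Matrix m n K) :
    (of fun i j => g (F *ᵥ Pi.single i 1) (F *ᵥ Pi.single j 1)) =
      Fᵀ * LinearMap.toMatrix₂' K g * F := by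
  have h := LinearMap.toMatrix₂'_compl₁₂ g (toLin' F) (toLin' F)
  rw [LinearMap.toMatrix'_toLin'] at h
  rw [← h]
  rfl

lemma ne_zero_of_congr_eq_diagonal {n K : Type*} [Fintype n] [DecidableEq n] [CommRing K]
    [IsDomain K] {G F : Matrix n n K} {d : n → K} (hG : G.det ≠ 0) (hF : F.det ≠ 0)
    (h : Fᵀ * G * F = diagonal d) (i : n) : d i ≠ 0 := by
  have hprod : F.det * G.det * F.det = ∏ i, d i := by
    rw [← det_diagonal, ← h, det_mul, det_mul, det_transpose]
  exact Finset.prod_ne_zero_iff.mp (hprod ▸ mul_ne_zero (mul_ne_zero hF hG) hF) i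
    (Finset.mem_univ i)

theorem stmt_5_general (g : (Fin 6 → ℝ) →ₗ[ℝ] (Fin 6 → ℝ) →ₗ[ℝ] ℝ)
    (hsym : ∀ x y, g x y = g y x)
    (hnd : ∀ x, (∀ y, g x y = 0) → x = 0)
    (ε : ℝ) (hdef : ∀ x ∈ gder, x ≠ 0 → 0 < ε * g x x) :
    ∃ F : Matrix (Fin 6) (Fin 6) ℝ, IsAuto F ∧
      ∃ l1 l2 l3 : ℝ, l1 ≠ 0 ∧ l2 ≠ 0 ∧ l3 ≠ 0 ∧ l1 ≥ l2 ∧ l2 ≥ l3 ∧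
        (Matrix.of fun i j : Fin 6 =>
            g (F.mulVec (Pi.single i 1)) (F.mulVec (Pi.single j 1))) =
          Matrix.diagonal ![l1, l2, l3, ε, ε, ε] := by
  let G := LinearMap.toMatrix₂' ℝ g
  have hG_symm : G.IsSymm := Matrix.ext fun _ _ => hsym _ _
  have hG_det : G.det ≠ 0 := Matrix.separatingLeft_iff_det_ne_zero.mp
    (LinearMap.SeparatingLeft.toMatrix₂' (R := ℝ) hnd)
  have hG_apply (x : Fin 6 → ℝ) : g x x = x ⬝ᵥ G *ᵥ x := by
    rw [← toLinearMap₂'_apply', toLinearMap₂'_toMatrix']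
  obtain ⟨F, hF, l, hl, hdiag⟩ :=
    exists_isAuto_congr_eq_diagonal hG_symm fun x hx hx0 => hG_apply x ▸ hdef x hx hx0
  have hF_det : F.det ≠ 0 :=
    ((isUnit_iff_isUnit_det F).mp (mulVec_injective_iff_isUnit.mp hF.1.1)).ne_zero
  have hne := ne_zero_of_congr_eq_diagonal hG_det hF_det hdiag
  exact ⟨F, hF, l 0, l 1, l 2, hne 0, hne 1, hne 2, hl (by decide), hl (by decide),
    (of_apply_mulVec_single_eq_congr g F).trans hdiag⟩

/-- A nondegenerate symmetric bilinear form on `T*𝔥₃` whose restriction to `𝔤′` is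
definite (positive if `ε = 1`, negative if `ε = −1`) can be brought, by an automorphism,
to the diagonal form `diag(λ₁,λ₂,λ₃,ε,ε,ε)` with `λ₁ ≥ λ₂ ≥ λ₃` nonzero. -/
theorem stmt_5 (g : (Fin 6 → ℝ) →ₗ[ℝ] (Fin 6 → ℝ) →ₗ[ℝ] ℝ)
    (hsym : ∀ x y, g x y = g y x)
    (hnd : ∀ x, (∀ y, g x y = 0) → x = 0)
    (ε : ℝ) (hε : ε = 1 ∨ ε = -1)
    (hdef : ∀ x ∈ gder, x ≠ 0 → 0 < ε * g x x) :
    ∃ F : Matrix (Fin 6) (Fin 6) ℝ, IsAuto F ∧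
      ∃ l1 l2 l3 : ℝ, l1 ≠ 0 ∧ l2 ≠ 0 ∧ l3 ≠ 0 ∧ l1 ≥ l2 ∧ l2 ≥ l3 ∧
        (Matrix.of fun i j : Fin 6 =>
            g (F.mulVec (Pi.single i 1)) (F.mulVec (Pi.single j 1))) =
          Matrix.diagonal ![l1, l2, l3, ε, ε, ε] :=
  stmt_5_general g hsym hnd ε hdef
end
end

section
/- Let ⟨·,·⟩ be a nondegenerate symmetric bilinear form on T*𝔥₃ that vanishes identically on 𝔤′ × 𝔤′, where 𝔤′ = span(e₄,e₅,e₆). Then the associated left invariant metric is flat: the curvature R of the Levi-Civita connection of ⟨·,·⟩ vanishes identically, i.e. R(x,y)z = 0 for all x,y,z ∈ T*𝔥₃. -/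
open Matrix

noncomputable section

/-!
Let `𝔷` be the center. If a subspace `W` contains all brackets and satisfies `W ≤ Wᗮ ≤ 𝔷`, the
Koszul formula gives `∇_x y ∈ Wᗮ` for all `x`, `y`, and `∇_x y = 0` as soon as `x` or `y` lies in
`Wᗮ`. Every term of the curvature is therefore zero. On `T*𝔥₃` the subspace `W = 𝔤′` is central,
and it is isotropic of half the dimension, so that `Wᗮ = W`.
-/

section LeviCivita

variable {R M : Type*} [CommRing R] [AddCommGroup M] [Module R M]

/-- `D x y = ∇_x y` is the Levi-Civita connection of the left invariant metric `g` for the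
bracket `b`, expressed by the Koszul formula. The bracket is encoded as a bare binary operation. -/
def IsLeviCivita (b : M → M → M) (g : LinearMap.BilinForm R M) (D : M → M → M) : Prop :=
  ∀ x y z, 2 * g (D x y) z = g (b x y) z - g (b y z) x + g (b z x) y

/-- The curvature `R(x,y)z` of the connection `D` for the bracket `b`. -/
def curvature (b D : M → M → M) (x y z : M) : M :=
  D x (D y z) - D y (D x z) - D (b x y) z

/-- Membership in the center of the bracket `b`, two-sided since `b` is any binary operation. -/
def IsBracketCentral (b : M → M → M) (z : M) : Prop :=
  ∀ x, b x z = 0 ∧ b z x = 0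

namespace IsLeviCivita

variable [NoZeroDivisors R] [NeZero (2 : R)] {b D : M → M → M} {g : LinearMap.BilinForm R M}
  {W : Submodule R M}

theorem mem_orthogonal (hD : IsLeviCivita b g D) (hsymm : g.IsSymm) (hb : ∀ x y, b x y ∈ W)
    (hiso : W ≤ g.orthogonal W) (hcentral : ∀ w ∈ W, IsBracketCentral b w) (x y : M) :
    D x y ∈ g.orthogonal W := by
  intro w hw
  have hkoszul : 2 * g (D x y) w = 0 := by
    rw [hD, (hcentral w hw y).1, (hcentral w hw x).2, hiso hw _ (hb x y)]
    simp
  rw [← hsymm.eq]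
  exact (mul_eq_zero_iff_left two_ne_zero).mp hkoszul

theorem eq_zero_of_right_mem_orthogonal (hD : IsLeviCivita b g D) (hg : g.SeparatingLeft)
    (hb : ∀ x y, b x y ∈ W) {y : M} (hy : y ∈ g.orthogonal W) (hcentral : IsBracketCentral b y)
    (x : M) : D x y = 0 := by
  refine hg _ fun z => ?_
  have hkoszul : 2 * g (D x y) z = 0 := by
    rw [hD, (hcentral x).1, (hcentral z).2, hy _ (hb z x)]
    simp
  exact (mul_eq_zero_iff_left two_ne_zero).mp hkoszul

theorem eq_zero_of_left_mem_orthogonal (hD : IsLeviCivita b g D) (hg : g.SeparatingLeft)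
    (hb : ∀ x y, b x y ∈ W) {x : M} (hx : x ∈ g.orthogonal W) (hcentral : IsBracketCentral b x)
    (y : M) : D x y = 0 := by
  refine hg _ fun z => ?_
  have hkoszul : 2 * g (D x y) z = 0 := by
    rw [hD, (hcentral y).2, (hcentral z).1, hx _ (hb y z)]
    simp
  exact (mul_eq_zero_iff_left two_ne_zero).mp hkoszul

theorem curvature_eq_zero (hD : IsLeviCivita b g D) (hsymm : g.IsSymm) (hg : g.SeparatingLeft)
    (hb : ∀ x y, b x y ∈ W) (hiso : W ≤ g.orthogonal W)
    (hcentral : ∀ w ∈ g.orthogonal W, IsBracketCentral b w) (x y z : M) :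
    curvature b D x y z = 0 := by
  have hmem : ∀ u v, D u v ∈ g.orthogonal W :=
    hD.mem_orthogonal hsymm hb hiso fun w hw => hcentral w (hiso hw)
  have hright : ∀ u v w, D u (D v w) = 0 := fun u v w =>
    hD.eq_zero_of_right_mem_orthogonal hg hb (hmem v w) (hcentral _ (hmem v w)) u
  have hleft : D (b x y) z = 0 :=
    hD.eq_zero_of_left_mem_orthogonal hg hb (hiso (hb x y)) (hcentral _ (hiso (hb x y))) z
  rw [curvature, hright, hright, hleft, sub_zero, sub_zero]

end IsLeviCivita

end LeviCivita

theorem orthogonal_eq_self_of_finrank_eq {K V : Type*} [Field K] [AddCommGroup V] [Module K V]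
    [FiniteDimensional K V] {g : LinearMap.BilinForm K V} (hg : g.Nondegenerate)
    {W : Submodule K V} (hiso : W ≤ g.orthogonal W)
    (hdim : Module.finrank K V = 2 * Module.finrank K W) : g.orthogonal W = W := by
  refine (Submodule.eq_of_le_of_finrank_eq hiso ?_).symm
  rw [LinearMap.BilinForm.finrank_orthogonal hg, hdim]
  omega

theorem mem_gder_iff {x : Fin 6 → ℝ} : x ∈ gder ↔ x 0 = 0 ∧ x 1 = 0 ∧ x 2 = 0 := by
  simp only [gder, Submodule.mem_span_triple, funext_iff, Fin.forall_fin_succ]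
  simp [eq_comm]

theorem bra_mem_gder (x y : Fin 6 → ℝ) : bra x y ∈ gder :=
  mem_gder_iff.mpr ⟨rfl, rfl, rfl⟩

theorem isBracketCentral_bra_of_mem_gder {w : Fin 6 → ℝ} (hw : w ∈ gder) :
    IsBracketCentral bra w := by
  obtain ⟨h0, h1, h2⟩ := mem_gder_iff.mp hw
  exact fun x => by simp [bra, h0, h1, h2]

theorem finrank_gder : Module.finrank ℝ gder = 3 := by
  have hindep : LinearIndependent ℝ fun i : Fin 3 => Pi.basisFun ℝ (Fin 6) (![3, 4, 5] i) :=
    (Pi.basisFun ℝ (Fin 6)).linearIndependent.comp ![3, 4, 5] (by decide)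
  have hspan : gder = Submodule.span ℝ
      (Set.range fun i : Fin 3 => Pi.basisFun ℝ (Fin 6) (![3, 4, 5] i)) := by
    refine congrArg (Submodule.span ℝ) (Set.ext fun v => ?_)
    simp [Fin.exists_fin_succ, eq_comm]
  rw [hspan, finrank_span_eq_card hindep, Fintype.card_fin]

/-- Any nondegenerate symmetric bilinear form on `T*𝔥₃` vanishing identically on
`𝔤′ × 𝔤′` gives a flat metric: the curvature of its Levi-Civita connection (the
connection determined by the Koszul formula) vanishes. -/
theorem stmt_8 (g : (Fin 6 → ℝ) →ₗ[ℝ] (Fin 6 → ℝ) →ₗ[ℝ] ℝ)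
    (hsym : ∀ x y, g x y = g y x)
    (hnd : ∀ x, (∀ y, g x y = 0) → x = 0)
    (hvan : ∀ x ∈ gder, ∀ y ∈ gder, g x y = 0)
    (D : (Fin 6 → ℝ) → (Fin 6 → ℝ) → (Fin 6 → ℝ))
    (hkoszul : ∀ x y z, 2 * g (D x y) z =
      g (bra x y) z - g (bra y z) x + g (bra z x) y) :
    ∀ x y z, D x (D y z) - D y (D x z) - D (bra x y) z = 0 := by
  have hsymm : LinearMap.BilinForm.IsSymm g := ⟨hsym⟩
  have hnondeg : LinearMap.BilinForm.Nondegenerate g :=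
    hsymm.isRefl.nondegenerate_iff_separatingLeft.mpr hnd
  have hiso : gder ≤ LinearMap.BilinForm.orthogonal g gder :=
    fun x hx w hw => hvan w hw x hx
  have hlagrangian : LinearMap.BilinForm.orthogonal g gder = gder :=
    orthogonal_eq_self_of_finrank_eq hnondeg hiso (by simp [finrank_gder])
  have hlc : IsLeviCivita bra g D := hkoszul
  exact hlc.curvature_eq_zero hsymm hnd bra_mem_gder hiso fun w hw =>
    isBracketCentral_bra_of_mem_gder (hlagrangian ▸ hw)
end
end
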